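/- Let θ₀, θ₁ ∈ ℝ, set H_γ = [[cos θ_γ, sin θ_γ], [sin θ_γ, −cos θ_γ]] for γ = 0,1, and for k ∈ [0, 2π) set R(k) = [[e^{ik}, 0],[0, e^{−ik}]] and Ĥ_γ(k) = R(k) H_γ. Then the eigenvalues of the 2×2 matrix Ĥ₁(k) Ĥ₀(k) are exactly λ_j(k) = cos θ₀ cos θ₁ cos 2k + sin θ₀ sin θ₁ + (−1)^j · i · √(1 − (cos θ₀ cos θ₁ cos 2k + sin θ₀ sin θ₁)²) for j = 0, 1. (Equivalently, the characteristic polynomial of Ĥ₁(k)Ĥ₀(k) is λ² − 2(cos θ₀ cos θ₁ cos 2k + sin θ₀ sin θ₁)λ + 1, and |cos θ₀ cos θ₁ cos 2k + sin θ₀ sin θ₁| ≤ 1 so the square root is real.) -/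

import Mathlib

open MeasureTheory Complex Filter

noncomputable section

/-- The Konno density function `f_K(x; a)`; only `|a|` matters. -/
def konnoDensity (a x : ℝ) : ℝ :=
  if |x| < |a| then
    Real.sqrt (1 - |a| ^ 2) / (Real.pi * (1 - x ^ 2) * Real.sqrt (|a| ^ 2 - x ^ 2))
  else 0

/-- Time evolution of a time-dependent discrete-time quantum walk on `ℤ`:
`ψ_{t+1}(x) = P_t ψ_t(x+1) + Q_t ψ_t(x-1)`, where `P_t`/`Q_t` are the top/bottom
row parts of the coin `U t`. -/
def QWEvolves (U : ℕ → Matrix (Fin 2) (Fin 2) ℂ) (ψ : ℕ → ℤ → Fin 2 → ℂ) : Prop :=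
  ∀ t : ℕ, ∀ x : ℤ,
    ψ (t + 1) x 0 = U t 0 0 * ψ t (x + 1) 0 + U t 0 1 * ψ t (x + 1) 1 ∧
    ψ (t + 1) x 1 = U t 1 0 * ψ t (x - 1) 0 + U t 1 1 * ψ t (x - 1) 1

/-- Initial state `ψ₀(0) = ᵀ(α, β)`, `ψ₀(x) = 0` for `x ≠ 0`. -/
def QWInit (α β : ℂ) (ψ : ℕ → ℤ → Fin 2 → ℂ) : Prop :=
  ψ 0 0 0 = α ∧ ψ 0 0 1 = β ∧ ∀ x : ℤ, x ≠ 0 → (ψ 0 x 0 = 0 ∧ ψ 0 x 1 = 0)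

/-- `P(X_t = x) = ‖ψ_t(x)‖²`. -/
def qwProb (ψ : ℕ → ℤ → Fin 2 → ℂ) (t : ℕ) (x : ℤ) : ℝ :=
  Complex.normSq (ψ t x 0) + Complex.normSq (ψ t x 1)

/-- The law of `X_t / t`: `μ_t = Σ_{x ∈ ℤ} P(X_t = x) δ_{x/t}`. -/
def qwMeasure (ψ : ℕ → ℤ → Fin 2 → ℂ) (t : ℕ) : Measure ℝ :=
  Measure.sum fun x : ℤ => ENNReal.ofReal (qwProb ψ t x) • Measure.dirac ((x : ℝ) / (t : ℝ))

/-- Weak convergence of `X_t / t` to the law with density `f`. -/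
def qwWeakLimit (ψ : ℕ → ℤ → Fin 2 → ℂ) (f : ℝ → ℝ) : Prop :=
  ∀ g : BoundedContinuousFunction ℝ ℝ,
    Tendsto (fun t : ℕ => ∫ y, g y ∂ qwMeasure ψ t) atTop (nhds (∫ y, g y * f y))

/-- `R(k) = diag(e^{ik}, e^{-ik})`. -/
def Rmat (k : ℝ) : Matrix (Fin 2) (Fin 2) ℂ :=
  !![Complex.exp (Complex.I * k), 0; 0, Complex.exp (-(Complex.I * k))]

/-- `H_γ = [[cos θ, sin θ], [sin θ, -cos θ]]` as a complex matrix. -/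
def Hcoin (θ : ℝ) : Matrix (Fin 2) (Fin 2) ℂ :=
  !![(Real.cos θ : ℂ), (Real.sin θ : ℂ); (Real.sin θ : ℂ), (-(Real.cos θ) : ℂ)]

/-- `p = cos θ₀ cos θ₁ cos 2k + sin θ₀ sin θ₁`. -/
def eigP (θ₀ θ₁ k : ℝ) : ℝ :=
  Real.cos θ₀ * Real.cos θ₁ * Real.cos (2 * k) + Real.sin θ₀ * Real.sin θ₁

theorem abs_eigP_le_one (θ₀ θ₁ k : ℝ) : |eigP θ₀ θ₁ k| ≤ 1 := by
  rw [← sq_le_one_iff_abs_le_one, eigP]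
  have h₀ := Real.sin_sq_add_cos_sq θ₀
  have h₁ := Real.sin_sq_add_cos_sq θ₁
  have h₂ := Real.sin_sq_add_cos_sq (2 * k)
  have cauchy_schwarz : (Real.cos θ₀ * Real.cos θ₁ * Real.cos (2 * k)
      + Real.sin θ₀ * Real.sin θ₁) ^ 2
      ≤ (Real.cos θ₀ ^ 2 + Real.sin θ₀ ^ 2)
        * ((Real.cos θ₁ * Real.cos (2 * k)) ^ 2 + Real.sin θ₁ ^ 2) := by
    nlinarith [sq_nonneg (Real.cos θ₀ * Real.sin θ₁
      - Real.sin θ₀ * (Real.cos θ₁ * Real.cos (2 * k)))]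
  nlinarith [sq_nonneg (Real.cos θ₁ * Real.sin (2 * k))]

theorem det_Rmat (k : ℝ) : (Rmat k).det = 1 := by
  simp [Rmat, Matrix.det_fin_two_of, ← Complex.exp_add]

theorem det_Hcoin (θ : ℝ) : (Hcoin θ).det = -1 := by
  rw [Hcoin, Matrix.det_fin_two_of]
  push_cast
  linear_combination -Complex.sin_sq_add_cos_sq (θ : ℂ)

theorem trace_walk (θ₀ θ₁ k : ℝ) :
    ((Rmat k * Hcoin θ₁) * (Rmat k * Hcoin θ₀)).trace = 2 * (eigP θ₀ θ₁ k : ℂ) := by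
  have h_inv : Complex.exp (Complex.I * k) * Complex.exp (-(Complex.I * k)) = 1 := by
    simp [← Complex.exp_add]
  have h_cos : 2 * Complex.cos (2 * k)
      = Complex.exp (Complex.I * k) ^ 2 + Complex.exp (-(Complex.I * k)) ^ 2 := by
    rw [Complex.two_cos, ← Complex.exp_nat_mul, ← Complex.exp_nat_mul]
    congr 2 <;> push_cast <;> ring
  simp only [Rmat, Hcoin, eigP, Matrix.trace_fin_two, Matrix.mul_apply, Fin.sum_univ_two,
    Matrix.of_apply, Matrix.cons_val', Matrix.cons_val_zero, Matrix.cons_val_one,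
    Matrix.cons_val_fin_one]
  push_cast
  linear_combination 2 * Complex.sin θ₀ * Complex.sin θ₁ * h_inv
    - Complex.cos θ₀ * Complex.cos θ₁ * h_cos

theorem mem_spectrum_walk_iff (θ₀ θ₁ k : ℝ) (μ : ℂ) :
    μ ∈ spectrum ℂ ((Rmat k * Hcoin θ₁) * (Rmat k * Hcoin θ₀)) ↔
      μ ^ 2 - 2 * (eigP θ₀ θ₁ k : ℂ) * μ + 1 = 0 := by
  rw [Matrix.mem_spectrum_iff_isRoot_charpoly, Matrix.charpoly_fin_two, trace_walk]
  simp [Polynomial.IsRoot, Matrix.det_mul, det_Rmat, det_Hcoin]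

/-- The eigenvalues of `Ĥ₁(k)Ĥ₀(k) = (R(k)H₁)(R(k)H₀)` are exactly
`λ_j(k) = p + (-1)^j i √(1 - p²)`, `j = 0, 1`; equivalently its characteristic
polynomial is `λ² - 2pλ + 1` and `|p| ≤ 1`. -/
theorem two_period_QW_eigenvalues (θ₀ θ₁ k : ℝ) (hk : k ∈ Set.Ico 0 (2 * Real.pi)) :
    |eigP θ₀ θ₁ k| ≤ 1 ∧
    spectrum ℂ ((Rmat k * Hcoin θ₁) * (Rmat k * Hcoin θ₀)) =
      {μ : ℂ | ∃ j : Fin 2,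
        μ = (eigP θ₀ θ₁ k : ℂ) +
          (-1 : ℂ) ^ (j : ℕ) * Complex.I * (Real.sqrt (1 - eigP θ₀ θ₁ k ^ 2) : ℂ)} := by
  refine ⟨abs_eigP_le_one θ₀ θ₁ k, ?_⟩
  have h_sqrt : ((Real.sqrt (1 - eigP θ₀ θ₁ k ^ 2) : ℝ) : ℂ) ^ 2
      = 1 - (eigP θ₀ θ₁ k : ℂ) ^ 2 := by
    have h_nonneg : 0 ≤ 1 - eigP θ₀ θ₁ k ^ 2 :=
      sub_nonneg.mpr ((sq_le_one_iff_abs_le_one _).mpr (abs_eigP_le_one θ₀ θ₁ k))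
    exact_mod_cast Real.sq_sqrt h_nonneg
  ext μ
  rw [mem_spectrum_walk_iff, Set.mem_ofPred_eq, Fin.exists_fin_two]
  generalize ((Real.sqrt (1 - eigP θ₀ θ₁ k ^ 2) : ℝ) : ℂ) = s at h_sqrt ⊢
  generalize (eigP θ₀ θ₁ k : ℂ) = p at h_sqrt ⊢
  have h_factor : μ ^ 2 - 2 * p * μ + 1
      = (μ - (p + Complex.I * s)) * (μ - (p + -1 * Complex.I * s)) := by
    linear_combination -h_sqrt + s ^ 2 * Complex.I_sq
  rw [h_factor, mul_eq_zero, sub_eq_zero, sub_eq_zero]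
  simp
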